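/- There exists a constant C > 0 such that for every D > 0, every B > D⁶, every m ∈ ℤ with δ̃₁ > D, and every ψ in the form domain of q_m: q_m[ψ] ≥ (Θ₀ + C·D²·B^{−1/3})·‖ψ‖². -/

import Mathlib

noncomputable section
open MeasureTheory Real Filter Set Topology

/-- The de Gennes energy `λ₁^𝒢(ξ)`. -/
def deGennes (ξ : ℝ) : ℝ :=
  sInf { q : ℝ | ∃ u : ℝ → ℂ, ContDiff ℝ 1 u ∧
    IntegrableOn (fun t => ‖u t‖ ^ 2) (Ioi 0) ∧
    IntegrableOn (fun t => ‖deriv u t‖ ^ 2 + (t + ξ) ^ 2 * ‖u t‖ ^ 2) (Ioi 0) ∧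
    0 < (∫ t in Ioi (0:ℝ), ‖u t‖ ^ 2) ∧
    q = (∫ t in Ioi (0:ℝ), (‖deriv u t‖ ^ 2 + (t + ξ) ^ 2 * ‖u t‖ ^ 2)) /
        ∫ t in Ioi (0:ℝ), ‖u t‖ ^ 2 }

/-- `Θ₀`, the infimum of the de Gennes energy. -/
def Theta0 : ℝ := ⨅ ξ : ℝ, deGennes ξ

/-- The half plane `ℝ²₊ = {(τ, ρ) : τ > 0}`. -/
def halfPlane : Set (ℝ × ℝ) := Ioi (0:ℝ) ×ˢ (univ : Set ℝ)

/-- The potential of the effective operator `Q_m(B)`. -/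
def qPot (B : ℝ) (m : ℤ) (p : ℝ × ℝ) : ℝ :=
  (p.1 + ((m : ℝ) - B / 2) / Real.sqrt B + B ^ (-(1:ℝ)/6) * p.2 ^ 2 / 2) ^ 2

/-- The integrand of the quadratic form `q_m`. -/
def qIntegrand (B : ℝ) (m : ℤ) (ψ : ℝ × ℝ → ℂ) (p : ℝ × ℝ) : ℝ :=
  ‖fderiv ℝ ψ p (1, 0)‖ ^ 2 + qPot B m p * ‖ψ p‖ ^ 2
    + B ^ (-(1:ℝ)/3) * ‖fderiv ℝ ψ p (0, 1)‖ ^ 2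

/-- The quadratic form `q_m[ψ]`. -/
def qForm (B : ℝ) (m : ℤ) (ψ : ℝ × ℝ → ℂ) : ℝ :=
  ∫ p in halfPlane, qIntegrand B m ψ p

/-- Membership in the form domain of `q_m`. -/
def InFormDomain (B : ℝ) (m : ℤ) (ψ : ℝ × ℝ → ℂ) : Prop :=
  ContDiff ℝ 1 ψ ∧ IntegrableOn (fun p => ‖ψ p‖ ^ 2) halfPlane ∧
    IntegrableOn (qIntegrand B m ψ) halfPlane

/-- The rescaled momentum `δ̃₁ = ((m - B/2)/√B - ξ₀)·B^{1/6}`. -/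
def delta1 (B : ℝ) (m : ℤ) (ξ₀ : ℝ) : ℝ :=
  (((m : ℝ) - B / 2) / Real.sqrt B - ξ₀) * B ^ ((1:ℝ)/6)

/-- Second derivative in the `τ` direction. -/
def d2τ (ψ : ℝ × ℝ → ℂ) (p : ℝ × ℝ) : ℂ :=
  fderiv ℝ (fun q => fderiv ℝ ψ q ((1:ℝ), (0:ℝ))) p (1, 0)

/-- Second derivative in the `ρ` direction. -/
def d2ρ (ψ : ℝ × ℝ → ℂ) (p : ℝ × ℝ) : ℂ :=
  fderiv ℝ (fun q => fderiv ℝ ψ q ((0:ℝ), (1:ℝ))) p (0, 1)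

/-- An eigenfunction of the model operator `Q_m(B)` on the half plane, with Neumann
boundary condition at `τ = 0`, eigenvalue `lam`, which is nonzero, smooth up to the
boundary, and lies in `L²` together with its first derivatives. -/
def IsQEigenfunction (B : ℝ) (m : ℤ) (lam : ℝ) (ψ : ℝ × ℝ → ℂ) : Prop :=
  ContDiff ℝ (⊤ : ℕ∞) ψ ∧
  IntegrableOn (fun p => ‖ψ p‖ ^ 2) halfPlane ∧
  IntegrableOn (fun p => ‖fderiv ℝ ψ p ((1:ℝ), (0:ℝ))‖ ^ 2) halfPlane ∧
  IntegrableOn (fun p => ‖fderiv ℝ ψ p ((0:ℝ), (1:ℝ))‖ ^ 2) halfPlane ∧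
  0 < (∫ p in halfPlane, ‖ψ p‖ ^ 2) ∧
  (∀ p ∈ halfPlane,
    -d2τ ψ p - ((B ^ (-(1:ℝ)/3) : ℝ) : ℂ) * d2ρ ψ p + ((qPot B m p : ℝ) : ℂ) * ψ p
      = (lam : ℂ) * ψ p) ∧
  (∀ ρ : ℝ, fderiv ℝ ψ ((0:ℝ), ρ) ((1:ℝ), (0:ℝ)) = 0)

/-- energy density -/
def eD (ξ : ℝ) (u : ℝ → ℂ) (t : ℝ) : ℝ := ‖deriv u t‖ ^ 2 + (t + ξ) ^ 2 * ‖u t‖ ^ 2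

/-- admissible on a half line -/
def Adm (ξ a : ℝ) (u : ℝ → ℂ) : Prop :=
  ContDiff ℝ 1 u ∧ IntegrableOn (fun t => ‖u t‖ ^ 2) (Ioi a) ∧ IntegrableOn (eD ξ u) (Ioi a)

theorem eD_nonneg (ξ : ℝ) (u : ℝ → ℂ) (t : ℝ) : 0 ≤ eD ξ u t := by unfold eD; positivity

theorem eD_cont (ξ : ℝ) {u : ℝ → ℂ} (hu : ContDiff ℝ 1 u) : Continuous (eD ξ u) := by
  have h1 := hu.continuous
  have h2 := (contDiff_one_iff_deriv.1 hu).2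
  unfold eD; fun_prop

theorem shift_int (f : ℝ → ℝ) (a : ℝ) :
    ∫ t in Ioi (0:ℝ), f (t + a) = ∫ t in Ioi a, f t := by
  have := (measurePreserving_add_right (volume : Measure ℝ) a).setIntegral_preimage_emb
    (measurableEmbedding_addRight a) f (Ioi a)
  simpa using this

theorem shift_intble {f : ℝ → ℝ} {a : ℝ} (h : IntegrableOn f (Ioi a)) :
    IntegrableOn (fun t => f (t + a)) (Ioi 0) := by
  have := ((measurePreserving_add_right (volume : Measure ℝ) a).integrableOn_comp_preimage
    (measurableEmbedding_addRight a) (f := f) (s := Ioi a)).2 h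
  simpa [Function.comp_def] using this

theorem Adm.mono {ξ a b : ℝ} {u : ℝ → ℂ} (h : Adm ξ a u) (hab : a ≤ b) : Adm ξ b u :=
  ⟨h.1, h.2.1.mono_set (Ioi_subset_Ioi hab), h.2.2.mono_set (Ioi_subset_Ioi hab)⟩

theorem Adm.shift {ξ a : ℝ} {u : ℝ → ℂ} (h : Adm ξ a u) :
    Adm (ξ + a) 0 (fun t => u (t + a)) := by
  refine ⟨h.1.comp (contDiff_id.add contDiff_const), shift_intble (f := fun t => ‖u t‖^2) h.2.1, ?_⟩
  convert shift_intble h.2.2 using 2 with t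
  simp only [eD, deriv_comp_add_const]
  ring

theorem deG_bdd (ξ : ℝ) : BddBelow { q : ℝ | ∃ u : ℝ → ℂ, ContDiff ℝ 1 u ∧
    IntegrableOn (fun t => ‖u t‖ ^ 2) (Ioi 0) ∧
    IntegrableOn (fun t => ‖deriv u t‖ ^ 2 + (t + ξ) ^ 2 * ‖u t‖ ^ 2) (Ioi 0) ∧
    0 < (∫ t in Ioi (0:ℝ), ‖u t‖ ^ 2) ∧
    q = (∫ t in Ioi (0:ℝ), (‖deriv u t‖ ^ 2 + (t + ξ) ^ 2 * ‖u t‖ ^ 2)) /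
        ∫ t in Ioi (0:ℝ), ‖u t‖ ^ 2 } := by
  refine ⟨0, ?_⟩
  rintro q ⟨u, -, -, -, h, rfl⟩
  exact div_nonneg (integral_nonneg fun t => by positivity) h.le

theorem deG_nonneg (ξ : ℝ) : 0 ≤ deGennes ξ := by
  apply Real.sInf_nonneg
  rintro q ⟨u, -, -, -, h, rfl⟩
  exact div_nonneg (integral_nonneg fun t => by positivity) h.le

theorem theta_le (ξ : ℝ) : Theta0 ≤ deGennes ξ :=
  ciInf_le ⟨0, by rintro _ ⟨x, rfl⟩; exact deG_nonneg x⟩ ξ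

theorem theta_nonneg : 0 ≤ Theta0 := Real.iInf_nonneg deG_nonneg

theorem deG_mul_le {ξ : ℝ} {u : ℝ → ℂ} (h : Adm ξ 0 u) :
    deGennes ξ * (∫ t in Ioi (0:ℝ), ‖u t‖ ^ 2) ≤ ∫ t in Ioi (0:ℝ), eD ξ u t := by
  have h0 : 0 ≤ ∫ t in Ioi (0:ℝ), ‖u t‖ ^ 2 := integral_nonneg fun t => by positivity
  rcases h0.eq_or_lt with h0 | h0
  · rw [← h0, mul_zero]; exact integral_nonneg fun t => eD_nonneg _ _ _
  · rw [← le_div_iff₀ h0]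
    exact csInf_le (deG_bdd ξ) ⟨u, h.1, h.2.1, h.2.2, h0, rfl⟩

theorem theta_mul_le {ξ a : ℝ} {u : ℝ → ℂ} (h : Adm ξ a u) :
    Theta0 * (∫ t in Ioi a, ‖u t‖ ^ 2) ≤ ∫ t in Ioi a, eD ξ u t := by
  have h1 := deG_mul_le h.shift
  have h2 : ∫ t in Ioi (0:ℝ), ‖u (t + a)‖ ^ 2 = ∫ t in Ioi a, ‖u t‖ ^ 2 :=
    shift_int (fun t => ‖u t‖ ^ 2) a
  have h3 : ∫ t in Ioi (0:ℝ), eD (ξ + a) (fun t => u (t + a)) t = ∫ t in Ioi a, eD ξ u t := by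
    rw [← shift_int (eD ξ u) a]
    refine setIntegral_congr_fun measurableSet_Ioi fun t _ => ?_
    simp only [eD, deriv_comp_add_const]; ring
  rw [h2, h3] at h1
  refine le_trans (mul_le_mul_of_nonneg_right (theta_le _) (integral_nonneg fun t => by positivity)) h1

open scoped RealInnerProductSpace in
theorem key_id {ξ a : ℝ} {u : ℝ → ℂ} (h : Adm ξ a u) :
    IntegrableOn (fun t => ‖u t‖ ^ 2 + (t + ξ) * (2 * ⟪u t, deriv u t⟫)) (Ioi a) ∧
    ∫ t in Ioi a, (‖u t‖ ^ 2 + (t + ξ) * (2 * ⟪u t, deriv u t⟫)) = - ((a + ξ) * ‖u a‖ ^ 2) := by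
  obtain ⟨hu, hN, hQ⟩ := h
  have c1 := hu.continuous
  have c2 := (contDiff_one_iff_deriv.1 hu).2
  have hd : ∀ t, HasDerivAt (fun t => (t + ξ) * ‖u t‖ ^ 2)
      (‖u t‖ ^ 2 + (t + ξ) * (2 * ⟪u t, deriv u t⟫)) t := by
    intro t
    have h1 := ((contDiff_one_iff_deriv.1 hu).1 t).hasDerivAt.norm_sq
    have h2 : HasDerivAt (fun t => (t + ξ) * ‖u t‖ ^ 2) _ t :=
      ((hasDerivAt_id t).add_const ξ).mul h1
    exact h2.congr_deriv (by simp)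
  have hi : IntegrableOn (fun t => ‖u t‖ ^ 2 + (t + ξ) * (2 * ⟪u t, deriv u t⟫)) (Ioi a) := by
    refine Integrable.mono' (hN.add hQ) (by fun_prop) (ae_of_all _ fun t => ?_)
    have h1 : |⟪u t, deriv u t⟫| ≤ ‖u t‖ * ‖deriv u t‖ := abs_real_inner_le_norm _ _
    simp only [Pi.add_apply, eD, Real.norm_eq_abs]
    have h2 : |(t + ξ) * (2 * ⟪u t, deriv u t⟫)| ≤ 2 * (|t + ξ| * ‖u t‖) * ‖deriv u t‖ := by
      rw [abs_mul, abs_mul, abs_two]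
      nlinarith [mul_le_mul_of_nonneg_left h1 (abs_nonneg (t + ξ))]
    have h3 : (t + ξ) ^ 2 = |t + ξ| ^ 2 := (sq_abs _).symm
    refine (abs_add_le _ _).trans ?_
    rw [abs_of_nonneg (by positivity : 0 ≤ ‖u t‖ ^ 2), h3]
    nlinarith [sq_nonneg (|t + ξ| * ‖u t‖ - ‖deriv u t‖)]
  have hi2 : IntegrableOn (fun t => (t + ξ) * ‖u t‖ ^ 2) (Ioi a) := by
    refine Integrable.mono' (hN.add hQ) (by fun_prop) (ae_of_all _ fun t => ?_)
    simp only [Pi.add_apply, eD, Real.norm_eq_abs]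
    rw [abs_mul, abs_of_nonneg (by positivity : 0 ≤ ‖u t‖ ^ 2)]
    have h3 : (t + ξ) ^ 2 = |t + ξ| ^ 2 := (sq_abs _).symm
    rw [h3]
    nlinarith [mul_nonneg (sq_nonneg (|t + ξ| - 1)) (sq_nonneg ‖u t‖), sq_nonneg ‖deriv u t‖,
      mul_nonneg (abs_nonneg (t + ξ)) (sq_nonneg ‖u t‖)]
  refine ⟨hi, ?_⟩
  have := integral_Ioi_of_hasDerivAt_of_tendsto' (fun x _ => hd x) hi
    (tendsto_zero_of_hasDerivAt_of_integrableOn_Ioi (fun x _ => hd x) hi hi2)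
  rw [this]; ring

open scoped RealInnerProductSpace in
theorem oneLe {ξ a : ℝ} {u : ℝ → ℂ} (h : Adm ξ a u) :
    (∫ t in Ioi a, ‖u t‖ ^ 2) + (a + ξ) * ‖u a‖ ^ 2 ≤ ∫ t in Ioi a, eD ξ u t := by
  obtain ⟨hi, he⟩ := key_id h
  have : ∫ t in Ioi a, (‖u t‖ ^ 2 - (‖u t‖ ^ 2 + (t + ξ) * (2 * ⟪u t, deriv u t⟫)))
      ≤ ∫ t in Ioi a, eD ξ u t := by
    apply integral_mono (h.2.1.sub hi) h.2.2
    intro t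
    have h1 : |⟪u t, deriv u t⟫| ≤ ‖u t‖ * ‖deriv u t‖ := abs_real_inner_le_norm _ _
    have h2 : |(t + ξ) * (2 * ⟪u t, deriv u t⟫)| ≤ 2 * (|t + ξ| * ‖u t‖) * ‖deriv u t‖ := by
      rw [abs_mul, abs_mul, abs_two]
      nlinarith [mul_le_mul_of_nonneg_left h1 (abs_nonneg (t + ξ))]
    have h3 : (t + ξ) ^ 2 = |t + ξ| ^ 2 := (sq_abs _).symm
    simp only [eD, Pi.sub_apply]
    rw [h3]
    nlinarith [sq_nonneg (|t + ξ| * ‖u t‖ - ‖deriv u t‖), neg_abs_le ((t + ξ) * (2 * ⟪u t, deriv u t⟫))]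
  rw [integral_sub h.2.1 hi, he] at this
  linarith

/-- gaussian -/
def gau (ξ t : ℝ) : ℂ := ((Real.exp (-(t + ξ) ^ 2 / 2) : ℝ) : ℂ)

theorem gau_deriv (ξ t : ℝ) : HasDerivAt (gau ξ) (-((t + ξ : ℝ) : ℂ) * gau ξ t) t := by
  have h : HasDerivAt (fun t : ℝ => Real.exp (-(t + ξ) ^ 2 / 2))
      (Real.exp (-(t + ξ) ^ 2 / 2) * (-(t + ξ))) t := by
    have h1 : HasDerivAt (fun t : ℝ => Real.exp (-(t + ξ) ^ 2 / 2)) _ t :=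
      ((((hasDerivAt_id t).add_const ξ).pow 2).neg.div_const 2).exp
    refine h1.congr_deriv ?_
    simp
    ring
  have h2 : HasDerivAt (gau ξ) _ t := h.ofReal_comp
  refine h2.congr_deriv ?_
  simp only [gau]; push_cast; ring

theorem gau_normsq (ξ t : ℝ) : ‖gau ξ t‖ ^ 2 = Real.exp (-1 * (t + ξ) ^ 2) := by
  rw [gau, Complex.norm_real, Real.norm_eq_abs, abs_of_pos (Real.exp_pos _), ← Real.exp_nat_mul]
  congr 1; push_cast; ring

theorem gau_eD (ξ t : ℝ) : eD ξ (gau ξ) t = 2 * ((t + ξ) ^ 2 * Real.exp (-1 * (t + ξ) ^ 2)) := by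
  rw [eD, (gau_deriv ξ t).deriv, norm_mul, mul_pow, gau_normsq, norm_neg, Complex.norm_real,
    Real.norm_eq_abs, sq_abs]
  ring

theorem gau_adm (ξ : ℝ) : Adm ξ 0 (gau ξ) := by
  refine ⟨?_, ?_, ?_⟩
  · unfold gau
    have : ContDiff ℝ 1 (fun t : ℝ => Real.exp (-(t + ξ) ^ 2 / 2)) := by fun_prop
    exact Complex.ofRealCLM.contDiff.comp this
  · simp only [gau_normsq]
    exact ((integrable_exp_neg_mul_sq one_pos).comp_add_right ξ).integrableOn
  · have h := integrable_rpow_mul_exp_neg_mul_sq one_pos (s := 2) (by norm_num)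
    have h2 := ((h.comp_add_right ξ).const_mul 2).integrableOn (s := Ioi 0)
    simp only [Real.rpow_two] at h2
    refine h2.congr_fun (fun t _ => (gau_eD ξ t).symm) measurableSet_Ioi

theorem gau_pos (ξ : ℝ) : 0 < ∫ t in Ioi (0:ℝ), ‖gau ξ t‖ ^ 2 := by
  have h := (gau_adm ξ).2.1
  rw [integral_pos_iff_support_of_nonneg (fun t => by positivity) h]
  have : Function.support (fun t => ‖gau ξ t‖ ^ 2) = univ := by
    ext t; simp [gau_normsq]
  rw [this]; simp

open scoped RealInnerProductSpace in
theorem theta_lt_one : Theta0 < 1 := by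
  obtain ⟨hi, he⟩ := key_id (gau_adm (-1))
  have h1 : ∫ t in Ioi (0:ℝ), eD (-1) (gau (-1)) t
      = ∫ t in Ioi (0:ℝ), (‖gau (-1) t‖ ^ 2 -
        (‖gau (-1) t‖ ^ 2 + (t + -1) * (2 * ⟪gau (-1) t, deriv (gau (-1)) t⟫))) := by
    congr 1; ext t
    have : deriv (gau (-1)) t = (-(t + -1)) • gau (-1) t := by
      rw [(gau_deriv (-1) t).deriv, Complex.real_smul]; push_cast; ring
    rw [gau_eD, this, inner_smul_right, real_inner_self_eq_norm_sq, gau_normsq]; ring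
  rw [integral_sub (gau_adm (-1)).2.1 hi, he] at h1
  have h2 := theta_mul_le (gau_adm (-1))
  rw [h1] at h2
  have h3 := gau_pos (-1)
  have h4 : 0 < ‖gau (-1) 0‖ ^ 2 := by rw [gau_normsq]; positivity
  nlinarith

theorem exists_near (ξ : ℝ) {r : ℝ} (hr : deGennes ξ < r) : ∃ u, Adm ξ 0 u ∧
    0 < (∫ t in Ioi (0:ℝ), ‖u t‖ ^ 2) ∧
    ∫ t in Ioi (0:ℝ), eD ξ u t < r * ∫ t in Ioi (0:ℝ), ‖u t‖ ^ 2 := by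
  unfold deGennes at hr
  obtain ⟨q, ⟨u, h1, h2, h3, h4, rfl⟩, hq⟩ := exists_lt_of_csInf_lt (by
    exact ⟨_, gau ξ, (gau_adm ξ).1, (gau_adm ξ).2.1, (gau_adm ξ).2.2, gau_pos ξ, rfl⟩) hr
  exact ⟨u, ⟨h1, h2, h3⟩, h4, (div_lt_iff₀ h4).1 hq⟩

theorem xi_neg {ξ₀ : ℝ} (h : deGennes ξ₀ = Theta0) : ξ₀ < 0 := by
  by_contra! hc
  obtain ⟨u, hu, hp, hq⟩ := exists_near ξ₀ (h.trans_lt theta_lt_one)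
  have := oneLe hu
  have : 0 ≤ (0 + ξ₀) * ‖u 0‖ ^ 2 := by positivity
  linarith

theorem split_int {f : ℝ → ℝ} {a b : ℝ} (hab : a ≤ b) (hf : IntegrableOn f (Ioi a)) :
    ∫ t in Ioi a, f t = (∫ t in Ioc a b, f t) + ∫ t in Ioi b, f t := by
  rw [← Ioc_union_Ioi_eq_Ioi hab, setIntegral_union (Ioc_disjoint_Ioi le_rfl) measurableSet_Ioi
    (hf.mono_set Ioc_subset_Ioi_self) (hf.mono_set (Ioi_subset_Ioi hab))]

theorem theta_ge {ξ₀ : ℝ} (h : deGennes ξ₀ = Theta0) : ξ₀ ^ 2 ≤ Theta0 := by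
  by_contra! hc
  have hneg := xi_neg h
  have h1 := theta_lt_one
  set η := (ξ₀ ^ 2 - Theta0) / 2 with hη
  have ηpos : 0 < η := by rw [hη]; linarith
  set l := η / (2 * -ξ₀) with hl
  have hA : 0 < -ξ₀ := by linarith
  have lpos : 0 < l := by positivity
  have hl2 : l * (2 * -ξ₀) = η := div_mul_cancel₀ _ (by positivity)
  set K := (1 + -ξ₀ / l) / η with hK
  have Kpos : 0 < K := by positivity
  have hKη : K * η = 1 + -ξ₀ / l := by rw [hK]; field_simp
  set ε := (1 - Theta0) / (2 * (1 + K)) with hε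
  have εpos : 0 < ε := div_pos (by linarith) (by positivity)
  have hε2 : ε * (2 * (1 + K)) = 1 - Theta0 := by rw [hε]; field_simp
  obtain ⟨u, hu, hp, hq⟩ := exists_near ξ₀ (r := Theta0 + ε) (by linarith)
  have hcu := hu.1.continuous
  set N := ∫ t in Ioi (0:ℝ), ‖u t‖ ^ 2
  set M := ∫ t in Ioc 0 l, ‖u t‖ ^ 2 with hM
  have iM : IntegrableOn (fun t => ‖u t‖ ^ 2) (Ioc 0 l) := hu.2.1.mono_set Ioc_subset_Ioi_self
  have hN := split_int lpos.le hu.2.1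
  have hQ := split_int lpos.le hu.2.2
  have e1 := theta_mul_le (hu.mono lpos.le)
  have e2 : (Theta0 + η) * M ≤ ∫ t in Ioc 0 l, eD ξ₀ u t := by
    rw [hM, ← integral_const_mul]
    refine setIntegral_mono_on (iM.const_mul _) (hu.2.2.mono_set Ioc_subset_Ioi_self)
      measurableSet_Ioc fun t ht => ?_
    have : Theta0 + η ≤ (t + ξ₀) ^ 2 := by nlinarith [ht.1, ht.2, sq_nonneg t]
    have := mul_le_mul_of_nonneg_right this (sq_nonneg ‖u t‖)
    simp only [eD]
    nlinarith [sq_nonneg ‖deriv u t‖]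
  have e3 : η * M ≤ ε * N := by
    have : N = M + ∫ t in Ioi l, ‖u t‖ ^ 2 := hN
    nlinarith
  obtain ⟨c, hc, hmin⟩ := isCompact_Icc.exists_isMinOn (nonempty_Icc.2 lpos.le)
    (f := fun t => ‖u t‖ ^ 2) (by fun_prop : Continuous fun t => ‖u t‖ ^ 2).continuousOn
  have e4 : l * ‖u c‖ ^ 2 ≤ M := by
    have : ∫ t in Ioc 0 l, ‖u c‖ ^ 2 ≤ M := by
      refine setIntegral_mono_on (by simp) iM measurableSet_Ioc fun t ht => ?_
      exact hmin (Ioc_subset_Icc_self ht)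
    simpa [lpos.le] using this
  have e5 := oneLe (hu.mono hc.1)
  have hNc := split_int hc.1 hu.2.1
  have hQc := split_int hc.1 hu.2.2
  have e6 : ∫ t in Ioc 0 c, ‖u t‖ ^ 2 ≤ M :=
    setIntegral_mono_set iM (ae_of_all _ fun t => by positivity)
      (Ioc_subset_Ioc_right hc.2).eventuallyLE
  have e7 : 0 ≤ ∫ t in Ioc 0 c, eD ξ₀ u t := integral_nonneg fun t => eD_nonneg _ _ _
  have e8 : -ξ₀ * ‖u c‖ ^ 2 ≤ -ξ₀ / l * M := by
    rw [div_mul_eq_mul_div, mul_div_assoc]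
    refine mul_le_mul_of_nonneg_left ?_ hA.le
    rw [le_div_iff₀ lpos]; linarith
  have e9 : 0 ≤ c * ‖u c‖ ^ 2 := mul_nonneg hc.1 (by positivity)
  have e10 : N - (1 + -ξ₀ / l) * M ≤ (Theta0 + ε) * N := by
    have : N = (∫ t in Ioc 0 c, ‖u t‖ ^ 2) + ∫ t in Ioi c, ‖u t‖ ^ 2 := hNc
    nlinarith
  rw [← hKη] at e10
  have e11 : K * (η * M) ≤ K * (ε * N) := mul_le_mul_of_nonneg_left e3 Kpos.le
  have : (1 - Theta0) * N ≤ ε * (1 + K) * N := by nlinarith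
  have := le_of_mul_le_mul_right this hp
  linarith

/-- glued derivative -/
def glD (u : ℝ → ℂ) (n : ℝ) (s : ℝ) : ℂ :=
  if s ≤ 0 then deriv u 0 * (((1 + n * s) * Real.exp (n * s) : ℝ) : ℂ) else deriv u s

theorem glD_cont {u : ℝ → ℂ} (hu : ContDiff ℝ 1 u) (n : ℝ) : Continuous (glD u n) := by
  have h2 := (contDiff_one_iff_deriv.1 hu).2
  unfold glD
  refine Continuous.if_le (by fun_prop) h2 continuous_id continuous_const ?_
  intro x hx
  have hx' : x = 0 := hx
  rw [hx']; simp

/-- glued function -/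
def gl (u : ℝ → ℂ) (n : ℝ) (t : ℝ) : ℂ := u 0 + ∫ s in (0:ℝ)..t, glD u n s

theorem gl_deriv {u : ℝ → ℂ} (hu : ContDiff ℝ 1 u) (n t : ℝ) :
    HasDerivAt (gl u n) (glD u n t) t := by
  have := intervalIntegral.integral_hasDerivAt_right
    ((glD_cont hu n).intervalIntegrable 0 t)
    ((glD_cont hu n).stronglyMeasurableAtFilter _ _) (glD_cont hu n).continuousAt
  exact this.const_add _

theorem gl_c1 {u : ℝ → ℂ} (hu : ContDiff ℝ 1 u) (n : ℝ) : ContDiff ℝ 1 (gl u n) := by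
  rw [contDiff_one_iff_deriv]
  refine ⟨fun t => (gl_deriv hu n t).differentiableAt, ?_⟩
  have : deriv (gl u n) = glD u n := funext fun t => (gl_deriv hu n t).deriv
  rw [this]; exact glD_cont hu n

theorem gl_pos {u : ℝ → ℂ} (hu : ContDiff ℝ 1 u) (n : ℝ) {t : ℝ} (ht : 0 ≤ t) :
    gl u n t = u t := by
  have h1 : ∫ s in (0:ℝ)..t, glD u n s = ∫ s in (0:ℝ)..t, deriv u s := by
    refine intervalIntegral.integral_congr_ae (ae_of_all _ fun s hs => ?_)
    rw [uIoc_of_le ht] at hs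
    simp [glD, not_le.2 hs.1]
  have h2 := (contDiff_one_iff_deriv.1 hu)
  rw [gl, h1, intervalIntegral.integral_eq_sub_of_hasDerivAt
    (fun s _ => (h2.1 s).hasDerivAt) (h2.2.intervalIntegrable _ _)]
  ring

theorem gl_neg (u : ℝ → ℂ) (n : ℝ) {t : ℝ} (ht : t ≤ 0) :
    gl u n t = u 0 + deriv u 0 * ((t * Real.exp (n * t) : ℝ) : ℂ) := by
  have hd : ∀ s : ℝ, HasDerivAt (fun s : ℝ => deriv u 0 * ((s * Real.exp (n * s) : ℝ) : ℂ))
      (deriv u 0 * (((1 + n * s) * Real.exp (n * s) : ℝ) : ℂ)) s := by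
    intro s
    have h1 : HasDerivAt (fun s : ℝ => s * Real.exp (n * s)) ((1 + n * s) * Real.exp (n * s)) s := by
      have h0 : HasDerivAt (fun s : ℝ => s * Real.exp (n * s)) _ s :=
        (hasDerivAt_id s).mul (((hasDerivAt_id s).const_mul n).exp)
      refine h0.congr_deriv ?_
      simp; ring
    exact h1.ofReal_comp.const_mul _
  have h1 : ∫ s in (0:ℝ)..t, glD u n s
      = ∫ s in (0:ℝ)..t, deriv u 0 * (((1 + n * s) * Real.exp (n * s) : ℝ) : ℂ) := by
    refine intervalIntegral.integral_congr_ae (ae_of_all _ fun s hs => ?_)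
    rw [uIoc_of_ge ht] at hs
    simp [glD, hs.2]
  rw [gl, h1, intervalIntegral.integral_eq_sub_of_hasDerivAt (fun s _ => hd s)
    ((by fun_prop : Continuous _).intervalIntegrable _ _)]
  simp

/-- integrand on the extension -/
def FF (ξ : ℝ) (u : ℝ → ℂ) (n t : ℝ) : ℝ :=
  ‖deriv u 0 * (((1 + n * t) * Real.exp (n * t) : ℝ) : ℂ)‖ ^ 2
    + ((t + ξ) ^ 2 - Theta0) * ‖u 0 + deriv u 0 * ((t * Real.exp (n * t) : ℝ) : ℂ)‖ ^ 2

theorem ext_ineq {ξ : ℝ} {u : ℝ → ℂ} (h : Adm ξ 0 u) {l : ℝ} (hl : 0 ≤ l) (n : ℝ) :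
    Theta0 * (∫ t in Ioi (0:ℝ), ‖u t‖ ^ 2) ≤
      (∫ t in Ioc (-l) 0, FF ξ u n t) + ∫ t in Ioi (0:ℝ), eD ξ u t := by
  have hl' : -l ≤ 0 := by linarith
  have c1 := gl_c1 h.1 n
  have cN : Continuous fun t => ‖gl u n t‖ ^ 2 := by have := c1.continuous; fun_prop
  have cE := eD_cont ξ c1
  have g1 : ∀ t ∈ Ioi (0:ℝ), ‖gl u n t‖ ^ 2 = ‖u t‖ ^ 2 := fun t ht => by
    rw [gl_pos h.1 n (le_of_lt ht)]
  have g2 : ∀ t ∈ Ioi (0:ℝ), eD ξ (gl u n) t = eD ξ u t := fun t ht => by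
    rw [eD, eD, gl_pos h.1 n (le_of_lt ht), (gl_deriv h.1 n t).deriv, glD, if_neg (not_le.2 ht)]
  have iN0 : IntegrableOn (fun t => ‖gl u n t‖ ^ 2) (Ioi 0) :=
    h.2.1.congr_fun (fun t ht => (g1 t ht).symm) measurableSet_Ioi
  have iE0 : IntegrableOn (eD ξ (gl u n)) (Ioi 0) :=
    h.2.2.congr_fun (fun t ht => (g2 t ht).symm) measurableSet_Ioi
  have iN1 : IntegrableOn (fun t => ‖gl u n t‖ ^ 2) (Ioc (-l) 0) :=
    (cN.integrableOn_Icc).mono_set Ioc_subset_Icc_self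
  have iE1 : IntegrableOn (eD ξ (gl u n)) (Ioc (-l) 0) :=
    (cE.integrableOn_Icc).mono_set Ioc_subset_Icc_self
  have hadm : Adm ξ (-l) (gl u n) := by
    refine ⟨c1, ?_, ?_⟩
    · rw [← Ioc_union_Ioi_eq_Ioi hl']; exact iN1.union iN0
    · rw [← Ioc_union_Ioi_eq_Ioi hl']; exact iE1.union iE0
  have key := theta_mul_le hadm
  rw [split_int hl' hadm.2.1, split_int hl' hadm.2.2,
    setIntegral_congr_fun measurableSet_Ioi g1, setIntegral_congr_fun measurableSet_Ioi g2] at key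
  have hF : ∫ t in Ioc (-l) 0, FF ξ u n t = (∫ t in Ioc (-l) 0, eD ξ (gl u n) t)
      - Theta0 * ∫ t in Ioc (-l) 0, ‖gl u n t‖ ^ 2 := by
    rw [← integral_const_mul, ← integral_sub iE1 (iN1.const_mul _)]
    refine setIntegral_congr_fun measurableSet_Ioc fun t ht => ?_
    simp only [FF, eD]
    rw [(gl_deriv h.1 n t).deriv, glD, if_pos ht.2, gl_neg u n ht.2]
    ring
  rw [hF]; linarith

theorem FF_lim (ξ : ℝ) (u : ℝ → ℂ) {l : ℝ} (hl : 0 ≤ l) :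
    Tendsto (fun n : ℕ => ∫ t in Ioc (-l) 0, FF ξ u n t) atTop
      (𝓝 (∫ t in Ioc (-l) 0, ((t + ξ) ^ 2 - Theta0) * ‖u 0‖ ^ 2)) := by
  refine tendsto_integral_filter_of_dominated_convergence
    (fun _ => ‖deriv u 0‖ ^ 2 + ((l + |ξ|) ^ 2 + Theta0) * (‖u 0‖ + ‖deriv u 0‖ * l) ^ 2) ?_ ?_ ?_ ?_
  · refine Eventually.of_forall fun n => Continuous.aestronglyMeasurable ?_
    unfold FF; fun_prop
  · refine Eventually.of_forall fun n => (ae_restrict_iff' measurableSet_Ioc).2 (ae_of_all _ fun t ht => ?_)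
    have hθ := theta_nonneg
    have hs : (n:ℝ) * t ≤ 0 := mul_nonpos_of_nonneg_of_nonpos (by positivity) ht.2
    have a1 : |(1 + n * t) * Real.exp (n * t)| ≤ 1 := by
      rw [abs_mul, abs_of_pos (Real.exp_pos _)]
      have b1 : |1 + n * t| ≤ Real.exp (-(n * t)) := by
        rw [abs_le]; constructor <;> nlinarith [Real.add_one_le_exp (-(n * t : ℝ))]
      calc _ ≤ Real.exp (-(n * t)) * Real.exp (n * t) :=
            mul_le_mul_of_nonneg_right b1 (Real.exp_pos _).le
        _ = 1 := by rw [← Real.exp_add]; simp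
    have a2 : |t * Real.exp (n * t)| ≤ l := by
      rw [abs_mul, abs_of_pos (Real.exp_pos _), abs_of_nonpos ht.2]
      have := Real.exp_le_one_iff.2 hs
      nlinarith [ht.1, ht.2, Real.exp_pos (n * t : ℝ)]
    have a3 : ‖u 0 + deriv u 0 * ((t * Real.exp (n * t) : ℝ) : ℂ)‖ ≤ ‖u 0‖ + ‖deriv u 0‖ * l := by
      refine (norm_add_le _ _).trans ?_
      rw [norm_mul, Complex.norm_real, Real.norm_eq_abs]
      gcongr
    have a4 : ‖deriv u 0 * (((1 + n * t) * Real.exp (n * t) : ℝ) : ℂ)‖ ≤ ‖deriv u 0‖ := by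
      rw [norm_mul, Complex.norm_real, Real.norm_eq_abs]
      nlinarith [norm_nonneg (deriv u 0)]
    have a5 : |(t + ξ) ^ 2 - Theta0| ≤ (l + |ξ|) ^ 2 + Theta0 := by
      have : |t + ξ| ≤ l + |ξ| := by
        refine (abs_add_le _ _).trans ?_
        rw [abs_of_nonpos ht.2]; linarith [ht.1]
      have := sq_le_sq' (by linarith [neg_abs_le (t + ξ), abs_nonneg (t + ξ)]) ((le_abs_self _).trans this)
      rw [abs_le]; constructor <;> nlinarith [sq_nonneg (t + ξ)]
    rw [FF, Real.norm_eq_abs]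
    refine (abs_add_le _ _).trans ?_
    rw [abs_mul, abs_of_nonneg (sq_nonneg ‖deriv u 0 * _‖), abs_of_nonneg (sq_nonneg ‖u 0 + _‖)]
    gcongr
  · simp
  · have hne : ∀ᵐ t : ℝ, t ≠ 0 := by simp [ae_iff]
    refine (ae_restrict_iff' measurableSet_Ioc).2 ?_
    filter_upwards [hne] with t ht0 ht
    have htn : t < 0 := lt_of_le_of_ne ht.2 ht0
    have l1 : Tendsto (fun n : ℕ => (n:ℝ) * (-t)) atTop atTop :=
      tendsto_natCast_atTop_atTop.atTop_mul_const (by linarith)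
    have l2 : Tendsto (fun n : ℕ => Real.exp (n * t)) atTop (𝓝 0) := by
      have := (Real.tendsto_pow_mul_exp_neg_atTop_nhds_zero 0).comp l1
      simpa [Function.comp_def] using this
    have l3 : Tendsto (fun n : ℕ => ((n:ℝ) * t) * Real.exp (n * t)) atTop (𝓝 0) := by
      have := ((Real.tendsto_pow_mul_exp_neg_atTop_nhds_zero 1).comp l1).neg
      simpa [Function.comp_def] using this
    have l4 : Tendsto (fun n : ℕ => (((1 + (n:ℝ) * t) * Real.exp (n * t) : ℝ) : ℂ)) atTop (𝓝 0) := by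
      have := l2.add l3
      rw [show (0:ℂ) = ((0 + 0 : ℝ) : ℂ) by simp]
      refine (Complex.continuous_ofReal.tendsto _).comp (this.congr fun n => ?_)
      ring
    have l5 : Tendsto (fun n : ℕ => ((t * Real.exp (n * t) : ℝ) : ℂ)) atTop (𝓝 0) := by
      have := l2.const_mul t
      rw [show (0:ℂ) = ((t * 0 : ℝ) : ℂ) by simp]
      exact (Complex.continuous_ofReal.tendsto _).comp this
    have r1 := ((l4.const_mul (deriv u 0)).norm.pow 2).add
      ((((l5.const_mul (deriv u 0)).const_add (u 0)).norm.pow 2).const_mul ((t + ξ) ^ 2 - Theta0))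
    simpa [FF] using r1

theorem ext_le {ξ : ℝ} {u : ℝ → ℂ} (h : Adm ξ 0 u) {l : ℝ} (hl : 0 ≤ l) :
    Theta0 * (∫ t in Ioi (0:ℝ), ‖u t‖ ^ 2)
      + (Theta0 * l - (ξ ^ 3 - (ξ - l) ^ 3) / 3) * ‖u 0‖ ^ 2 ≤ ∫ t in Ioi (0:ℝ), eD ξ u t := by
  have h1 := ge_of_tendsto' ((FF_lim ξ u hl).add_const (∫ t in Ioi (0:ℝ), eD ξ u t))
    (fun n : ℕ => ext_ineq h hl n)
  have h2 : ∫ t in Ioc (-l) 0, ((t + ξ) ^ 2 - Theta0) * ‖u 0‖ ^ 2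
      = - ((Theta0 * l - (ξ ^ 3 - (ξ - l) ^ 3) / 3) * ‖u 0‖ ^ 2) := by
    rw [← intervalIntegral.integral_of_le (by linarith)]
    have hd : ∀ t : ℝ, HasDerivAt (fun t => ((t + ξ) ^ 3 / 3 - Theta0 * t) * ‖u 0‖ ^ 2)
        (((t + ξ) ^ 2 - Theta0) * ‖u 0‖ ^ 2) t := by
      intro t
      have h0 : HasDerivAt (fun t => ((t + ξ) ^ 3 / 3 - Theta0 * t) * ‖u 0‖ ^ 2) _ t :=
        (((((hasDerivAt_id t).add_const ξ).pow 3).div_const 3).sub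
        ((hasDerivAt_id t).const_mul Theta0)).mul_const (‖u 0‖ ^ 2)
      refine h0.congr_deriv ?_
      simp
    rw [intervalIntegral.integral_eq_sub_of_hasDerivAt (fun t _ => hd t)
      ((by fun_prop : Continuous _).intervalIntegrable _ _)]
    ring
  rw [h2] at h1
  linarith

theorem oneD {ξ₀ : ℝ} (h : deGennes ξ₀ = Theta0) {d : ℝ} (hd : 0 < d) (hd1 : d < 1) {ξ : ℝ}
    (hξ : ξ₀ + d ≤ ξ) {u : ℝ → ℂ} (hu : Adm ξ 0 u) :
    (Theta0 + (1 - Theta0) / 3 * d ^ 2) * (∫ t in Ioi (0:ℝ), ‖u t‖ ^ 2)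
      ≤ ∫ t in Ioi (0:ℝ), eD ξ u t := by
  have t1 := theta_lt_one
  have t2 := theta_ge h
  have t3 := xi_neg h
  have e1 := oneLe hu
  have hN : 0 ≤ ∫ t in Ioi (0:ℝ), ‖u t‖ ^ 2 := integral_nonneg fun t => by positivity
  set N := ∫ t in Ioi (0:ℝ), ‖u t‖ ^ 2
  set Q := ∫ t in Ioi (0:ℝ), eD ξ u t
  have hu0 : 0 ≤ ‖u 0‖ ^ 2 := by positivity
  set s := ‖u 0‖ ^ 2
  have hd2 : d ^ 2 < 1 := by nlinarith
  rcases le_or_gt 0 ξ with hp | hp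
  · have : 0 ≤ (0 + ξ) * s := by positivity
    have : (Theta0 + (1 - Theta0) / 3 * d ^ 2) * N ≤ 1 * N := by
      apply mul_le_mul_of_nonneg_right _ hN
      nlinarith
    linarith
  · have hl : 0 ≤ ξ - ξ₀ := by linarith
    have e2 := ext_le hu hl
    obtain ⟨l, rfl⟩ : ∃ l, ξ = ξ₀ + l := ⟨ξ - ξ₀, by ring⟩
    have hdl : d ≤ l := by linarith
    have e3 : 2 / 3 * (-ξ₀) * d ^ 2 ≤ Theta0 * (ξ₀ + l - ξ₀) - ((ξ₀ + l) ^ 3 - (ξ₀ + l - (ξ₀ + l - ξ₀)) ^ 3) / 3 := by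
      have : Theta0 * (ξ₀ + l - ξ₀) - ((ξ₀ + l) ^ 3 - (ξ₀ + l - (ξ₀ + l - ξ₀)) ^ 3) / 3
        = (Theta0 - ξ₀ ^ 2) * l + (-ξ₀ - l / 3) * l ^ 2 := by ring
      rw [this]
      have a1 : 0 ≤ (Theta0 - ξ₀ ^ 2) * l := mul_nonneg (by linarith) (by linarith)
      have a2 : 2 / 3 * (-ξ₀) * d ^ 2 ≤ (-ξ₀ - l / 3) * l ^ 2 :=
        mul_le_mul (by linarith) (by nlinarith) (by positivity) (by linarith)
      linarith
    have e4 := mul_le_mul_of_nonneg_right e3 hu0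
    have e5 : Theta0 * N + 2 / 3 * (-ξ₀) * d ^ 2 * s ≤ Q := by linarith
    have e6 : N - (-ξ₀) * s ≤ Q := by nlinarith
    have f1 : (1 - d ^ 2 / 3) * (Theta0 * N + 2 / 3 * (-ξ₀) * d ^ 2 * s) ≤ (1 - d ^ 2 / 3) * Q :=
      mul_le_mul_of_nonneg_left e5 (by linarith)
    have f2 : d ^ 2 / 3 * (N - (-ξ₀) * s) ≤ d ^ 2 / 3 * Q :=
      mul_le_mul_of_nonneg_left e6 (by positivity)
    have f3 : 0 ≤ (-ξ₀) * s * d ^ 2 * (1 / 3 - 2 / 9 * d ^ 2) :=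
      mul_nonneg (mul_nonneg (mul_nonneg (by linarith) hu0) (by positivity)) (by linarith)
    linarith

/-- Lemma 2.9: lower bound for large positive `δ̃₁`. -/
theorem statement5
    (ξ₀ : ℝ) (hξ₀ : deGennes ξ₀ = Theta0)
    (hξ₀uniq : ∀ ξ : ℝ, deGennes ξ = Theta0 → ξ = ξ₀) :
    ∃ C : ℝ, 0 < C ∧
      ∀ D : ℝ, 0 < D → ∀ B : ℝ, D ^ 6 < B → ∀ m : ℤ, D < delta1 B m ξ₀ →
        ∀ ψ : ℝ × ℝ → ℂ, InFormDomain B m ψ →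
          (Theta0 + C * D ^ 2 * B ^ (-(1:ℝ)/3)) * (∫ p in halfPlane, ‖ψ p‖ ^ 2)
            ≤ qForm B m ψ := by
  have t1 := theta_lt_one
  refine ⟨(1 - Theta0) / 3, by linarith, ?_⟩
  intro D hD B hB m hm ψ ⟨hψ, iN, iQ⟩
  have hBpos : 0 < B := lt_trans (by positivity) hB
  set β := B ^ (-(1:ℝ)/6) with hβ
  have βpos : 0 < β := Real.rpow_pos_of_pos hBpos _
  have hβinv : B ^ ((1:ℝ)/6) * β = 1 := by
    rw [hβ, ← Real.rpow_add hBpos]; norm_num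
  have hβ2 : B ^ (-(1:ℝ)/3) = β ^ 2 := by
    rw [hβ, ← Real.rpow_natCast, ← Real.rpow_mul hBpos.le]; norm_num
  have hDB : D < B ^ ((1:ℝ)/6) := by
    have := Real.rpow_lt_rpow (by positivity) hB (by norm_num : (0:ℝ) < 1/6)
    rwa [← Real.rpow_natCast, ← Real.rpow_mul hD.le, show ((6:ℕ):ℝ) * (1/6) = 1 by norm_num,
      Real.rpow_one] at this
  have hd0 : 0 < D * β := by positivity
  have hd1 : D * β < 1 := by rw [← hβinv]; exact mul_lt_mul_of_pos_right hDB βpos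
  have hξ : ξ₀ + D * β ≤ ((m : ℝ) - B / 2) / Real.sqrt B := by
    have := mul_lt_mul_of_pos_right hm βpos
    rw [delta1, mul_assoc, hβinv] at this
    linarith
  set ζ := ((m : ℝ) - B / 2) / Real.sqrt B with hζ
  have hmeas : (volume : Measure (ℝ × ℝ)).restrict halfPlane
      = ((volume : Measure ℝ).restrict (Ioi 0)).prod volume := by
    rw [halfPlane, Measure.volume_eq_prod, ← Measure.prod_restrict, Measure.restrict_univ]
  rw [IntegrableOn, hmeas] at iN iQ
  rw [qForm, hmeas, integral_prod_symm _ iN, integral_prod_symm _ iQ, ← integral_const_mul]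
  refine integral_mono_ae (iN.integral_prod_right.const_mul _) iQ.integral_prod_right ?_
  filter_upwards [iN.prod_left_ae, iQ.prod_left_ae] with ρ jN jQ
  have hslice : ContDiff ℝ 1 (fun t : ℝ => ψ (t, ρ)) := by fun_prop
  have hder : ∀ t, deriv (fun t : ℝ => ψ (t, ρ)) t = fderiv ℝ ψ (t, ρ) (1, 0) := by
    intro t
    have h1 : HasDerivAt (fun t : ℝ => (t, ρ)) ((1:ℝ), (0:ℝ)) t :=
      (hasDerivAt_id t).prodMk (hasDerivAt_const t ρ)
    exact ((hψ.differentiable (by norm_num) (t, ρ)).hasFDerivAt.comp_hasDerivAt t h1).deriv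
  have hle : ∀ t, eD (ζ + β * ρ ^ 2 / 2) (fun t : ℝ => ψ (t, ρ)) t ≤ qIntegrand B m ψ (t, ρ) := by
    intro t
    simp only [eD, qIntegrand, qPot, hder]
    rw [← hβ, ← hζ, ← add_assoc]
    have : 0 ≤ B ^ (-(1:ℝ)/3) * ‖fderiv ℝ ψ (t, ρ) (0, 1)‖ ^ 2 := by positivity
    linarith
  have hadm : Adm (ζ + β * ρ ^ 2 / 2) 0 (fun t : ℝ => ψ (t, ρ)) := by
    refine ⟨hslice, jN, Integrable.mono' jQ (eD_cont _ hslice).aestronglyMeasurable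
      (ae_of_all _ fun t => ?_)⟩
    rw [Real.norm_eq_abs, abs_of_nonneg (eD_nonneg _ _ _)]
    exact hle t
  have h1 := oneD hξ₀ hd0 hd1 (ξ := ζ + β * ρ ^ 2 / 2) (by
    have : 0 ≤ β * ρ ^ 2 / 2 := by positivity
    linarith) hadm
  have h2 : ∫ t in Ioi (0:ℝ), eD (ζ + β * ρ ^ 2 / 2) (fun t : ℝ => ψ (t, ρ)) t
      ≤ ∫ t in Ioi (0:ℝ), qIntegrand B m ψ (t, ρ) := integral_mono hadm.2.2 jQ hle
  rw [hβ2, mul_assoc, ← mul_pow]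
  exact h1.trans h2
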